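/- Let N be a positive integer and δ₀ ∈ (0,1). There exists a constant c > 0, depending only on N and δ₀, such that for all s, t with 0 < s < t < 1 and t − s ≥ δ₀ and every measurable set E ⊆ ℝ^N with |E| < ∞, one has ((1−t)·P_t(E))^{(N−s)/(N−t)} ≥ c · s·P_s(E) (as an inequality in [0,∞]). -/

import Mathlib

open MeasureTheory ENNReal

/-- Interaction energy `∫_A ∫_B |x-y|^{-(N+α)} dy dx` in `[0,∞]`. -/
noncomputable def interEnergy (N : ℕ) (α : ℝ)
    (A B : Set (EuclideanSpace ℝ (Fin N))) : ℝ≥0∞ :=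
  ∫⁻ x in A, ∫⁻ y in B, ENNReal.ofReal (‖x - y‖ ^ (-((N : ℝ) + α))) ∂volume ∂volume

/-- The fractional `α`-perimeter `P_α(E) = ∫_E ∫_{Eᶜ} |x-y|^{-(N+α)} dy dx`. -/
noncomputable def fracPer (N : ℕ) (α : ℝ) (E : Set (EuclideanSpace ℝ (Fin N))) : ℝ≥0∞ :=
  interEnergy N α E Eᶜ


abbrev VV (N : ℕ) := EuclideanSpace ℝ (Fin N)

noncomputable def gE {N : ℕ} (E : Set (VV N)) (h : VV N) : ℝ≥0∞ := volume (E ∩ {x | x + h ∉ E})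

noncomputable def kk {N : ℕ} (α : ℝ) (h : VV N) : ℝ≥0∞ := ENNReal.ofReal (‖h‖ ^ (-((N : ℝ) + α)))

def Ring' (N : ℕ) (r : ℝ) : Set (VV N) := {h | r / 2 < ‖h‖ ∧ ‖h‖ ≤ r}

lemma measurable_kk {N : ℕ} (α : ℝ) : Measurable (kk (N := N) α) := by
  unfold kk; fun_prop

lemma measurableSet_ring (N : ℕ) (r : ℝ) : MeasurableSet (Ring' N r) := by
  unfold Ring'
  exact (measurableSet_lt measurable_const measurable_norm).inter
    (measurableSet_le measurable_norm measurable_const)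

lemma conv_eq {N : ℕ} (A B : Set (VV N)) (hA : MeasurableSet A) (hB : MeasurableSet B)
    (k : VV N → ℝ≥0∞) (hk : Measurable k) :
    ∫⁻ x in A, ∫⁻ y in B, k (y - x) = ∫⁻ h, k h * volume (A ∩ {x | x + h ∈ B}) := by
  have hmeas : Measurable (fun p : VV N × VV N =>
      A.indicator (fun _ => (1:ℝ≥0∞)) p.1 * (k p.2 * B.indicator (fun _ => (1:ℝ≥0∞)) (p.1 + p.2))) := by
    have h1 : Measurable (A.indicator (fun _ => (1:ℝ≥0∞))) := measurable_const.indicator hA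
    have h2 : Measurable (B.indicator (fun _ => (1:ℝ≥0∞))) := measurable_const.indicator hB
    fun_prop
  calc ∫⁻ x in A, ∫⁻ y in B, k (y - x)
      = ∫⁻ x, ∫⁻ h, A.indicator (fun _ => (1:ℝ≥0∞)) x * (k h * B.indicator (fun _ => (1:ℝ≥0∞)) (x + h)) := by
        rw [← lintegral_indicator hA]
        refine lintegral_congr fun x => ?_
        rw [lintegral_const_mul' _ _ (by by_cases hx : x ∈ A <;> simp [hx])]
        by_cases hx : x ∈ A
        · simp only [hx, Set.indicator_of_mem, one_mul]
          rw [← lintegral_indicator hB, ← lintegral_add_left_eq_self _ x]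
          refine lintegral_congr fun h => ?_
          by_cases hh : x + h ∈ B <;> simp [hh]
        · simp [hx]
    _ = ∫⁻ h, ∫⁻ x, A.indicator (fun _ => (1:ℝ≥0∞)) x * (k h * B.indicator (fun _ => (1:ℝ≥0∞)) (x + h)) :=
        lintegral_lintegral_swap hmeas.aemeasurable
    _ = _ := by
        refine lintegral_congr fun h => ?_
        have hS : MeasurableSet (A ∩ {x | x + h ∈ B}) :=
          hA.inter (hB.preimage (measurable_id.add_const h))
        have : ∀ x, A.indicator (fun _ => (1:ℝ≥0∞)) x * (k h * B.indicator (fun _ => (1:ℝ≥0∞)) (x + h))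
            = k h * (A ∩ {x | x + h ∈ B}).indicator (fun _ => 1) x := by
          intro x
          by_cases h1 : x ∈ A <;> by_cases h2 : x + h ∈ B <;> simp [h1, h2]
        simp_rw [this]
        rw [lintegral_const_mul _ (measurable_const.indicator hS), lintegral_indicator hS]
        simp

lemma fracPer_eq {N : ℕ} (α : ℝ) (E : Set (VV N)) (hE : MeasurableSet E) :
    fracPer N α E = ∫⁻ h, kk α h * gE E h := by
  unfold fracPer interEnergy gE
  rw [← show _ = ∫⁻ h, kk α h * volume (E ∩ {x | x + h ∉ E}) from
    conv_eq E Eᶜ hE hE.compl (kk α) (measurable_kk α)]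
  simp only [kk, norm_sub_rev]

lemma gE_le {N : ℕ} (E : Set (VV N)) (h : VV N) : gE E h ≤ volume E :=
  measure_mono Set.inter_subset_left

lemma gE_zero {N : ℕ} (E : Set (VV N)) : gE E 0 = 0 := by
  unfold gE
  have : E ∩ {x | x + 0 ∉ E} = ∅ := by ext x; simp
  rw [this]; simp

lemma measurable_gE {N : ℕ} (E : Set (VV N)) (hE : MeasurableSet E) : Measurable (gE E) := by
  unfold gE
  have hS : MeasurableSet {p : VV N × VV N | p.2 ∈ E ∧ p.2 + p.1 ∉ E} := by
    exact (hE.preimage measurable_snd).inter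
      (hE.compl.preimage (measurable_snd.add measurable_fst))
  exact measurable_measure_prodMk_left hS

lemma gE_two {N : ℕ} (E : Set (VV N)) (h : VV N) : gE E ((2:ℝ) • h) ≤ 2 * gE E h := by
  have hsub : E ∩ {x | x + (2:ℝ) • h ∉ E} ⊆
      (E ∩ {x | x + h ∉ E}) ∪ ((fun x => x + h) ⁻¹' (E ∩ {x | x + h ∉ E})) := by
    rintro x ⟨hx, hx2⟩
    simp only [Set.mem_ofPred_eq, two_smul, ← add_assoc] at hx2
    by_cases h1 : x + h ∈ E
    · right; exact ⟨h1, hx2⟩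
    · left; exact ⟨hx, h1⟩
  calc gE E ((2:ℝ) • h) ≤ _ := measure_mono hsub
    _ ≤ _ := measure_union_le _ _
    _ = 2 * gE E h := by rw [measure_preimage_add_right]; unfold gE; ring

lemma gE_int {N : ℕ} (E : Set (VV N)) (hE : MeasurableSet E) (B : Set (VV N)) :
    volume B * volume E ≤ (∫⁻ h in B, gE E h) + volume E * volume E := by
  have h1 : ∫⁻ h : VV N, volume (E ∩ {x | x + h ∈ E}) = volume E * volume E := by
    have := conv_eq E E hE hE (fun _ => 1) measurable_const
    simp only [one_mul] at this
    rw [← this]; simp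
  have h2 : ∀ h, volume E ≤ gE E h + volume (E ∩ {x | x + h ∈ E}) := by
    intro h
    refine le_trans (measure_mono ?_) (measure_union_le _ _)
    intro x hx
    by_cases hh : x + h ∈ E
    · right; exact ⟨hx, hh⟩
    · left; exact ⟨hx, hh⟩
  calc volume B * volume E = ∫⁻ h in B, volume E := by simp [mul_comm]
    _ ≤ ∫⁻ h in B, (gE E h + volume (E ∩ {x | x + h ∈ E})) := lintegral_mono h2
    _ = (∫⁻ h in B, gE E h) + ∫⁻ h in B, volume (E ∩ {x | x + h ∈ E}) :=
        lintegral_add_left (measurable_gE E hE) _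
    _ ≤ _ := by
        gcongr
        rw [← h1]
        exact setLIntegral_le_lintegral _ _

noncomputable def AA {N : ℕ} (E : Set (VV N)) (α r : ℝ) : ℝ≥0∞ := ∫⁻ h in Ring' N r, kk α h * gE E h

lemma lint_scale {N : ℕ} (f : VV N → ℝ≥0∞) :
    ∫⁻ h, f h = ENNReal.ofReal ((1/2)^N) * ∫⁻ h : VV N, f ((1/2:ℝ) • h) := by
  have hc : (1/2:ℝ) ≠ 0 := by norm_num
  have h1 := (measurableEmbedding_const_smul₀ (α := VV N) hc).lintegral_map (μ := volume) f
  rw [← h1, Measure.map_addHaar_smul _ hc, lintegral_smul_measure]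
  simp only [finrank_euclideanSpace, Fintype.card_fin, smul_eq_mul]
  rw [← mul_assoc, ← ENNReal.ofReal_mul (by positivity)]
  rw [abs_of_nonneg (by positivity), mul_inv_cancel₀ (by positivity)]
  simp

lemma AA_half {N : ℕ} (E : Set (VV N)) (t r : ℝ) :
    ENNReal.ofReal ((2:ℝ) ^ (-(1-t))) * AA E t r ≤ AA E t (r/2) := by
  unfold AA
  rw [← lintegral_indicator (measurableSet_ring _ _), ← lintegral_indicator (measurableSet_ring _ _)]
  rw [lint_scale ((Ring' N (r/2)).indicator _), ← lintegral_const_mul' _ _ ENNReal.ofReal_ne_top,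
    ← lintegral_const_mul' _ _ ENNReal.ofReal_ne_top]
  refine lintegral_mono fun h => ?_
  have hn : ‖(1/2:ℝ) • h‖ = ‖h‖ / 2 := by rw [norm_smul]; norm_num; ring
  by_cases hr : h ∈ Ring' N r
  · have hr' : (1/2:ℝ) • h ∈ Ring' N (r/2) := by
      simp only [Ring', Set.mem_ofPred_eq, hn] at hr ⊢
      constructor <;> linarith [hr.1, hr.2]
    simp only [Set.indicator_of_mem hr, Set.indicator_of_mem hr']
    have hg : gE E h ≤ 2 * gE E ((1/2:ℝ) • h) := by
      have := gE_two E ((1/2:ℝ) • h)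
      rwa [smul_smul, show (2:ℝ) * (1/2) = 1 by norm_num, one_smul] at this
    have hk : kk t ((1/2:ℝ) • h) = ENNReal.ofReal ((2:ℝ)^((N:ℝ)+t)) * kk t h := by
      unfold kk
      rw [hn, ← ENNReal.ofReal_mul (by positivity), Real.div_rpow (by positivity) (by positivity),
        Real.rpow_neg (by positivity : (0:ℝ) ≤ 2)]
      congr 1
      field_simp
    rw [hk]
    calc _ ≤ ENNReal.ofReal (2 ^ (-(1 - t))) * (kk t h * (2 * gE E ((1/2:ℝ) • h))) := by gcongr
      _ = (ENNReal.ofReal (2 ^ (-(1 - t))) * ENNReal.ofReal 2) * (kk t h * gE E ((1/2:ℝ) • h)) := by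
          simp; ring
      _ = (ENNReal.ofReal ((1/2)^N) * ENNReal.ofReal ((2:ℝ)^((N:ℝ)+t))) * (kk t h * gE E ((1/2:ℝ) • h)) := by
          rw [← ENNReal.ofReal_mul (by positivity), ← ENNReal.ofReal_mul (by positivity)]
          congr 2
          rw [Real.rpow_add (by norm_num), Real.rpow_natCast, ← mul_assoc, ← mul_pow]
          norm_num
          rw [← Real.rpow_add_one (by norm_num)]
          congr 1; ring
      _ ≤ _ := by rw [mul_assoc, mul_assoc]
  · simp [hr]

lemma ring_sum_le {N : ℕ} (f : VV N → ℝ≥0∞) (R : ℝ) (hR : 0 < R) :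
    ∑' k : ℕ, ∫⁻ h in Ring' N (R / 2 ^ k), f h ≤ ∫⁻ h, f h := by
  rw [← lintegral_iUnion (fun k => measurableSet_ring N _)]
  · exact setLIntegral_le_lintegral _ _
  · have key : ∀ i j : ℕ, i < j → Disjoint (Ring' N (R / 2 ^ i)) (Ring' N (R / 2 ^ j)) := by
      intro i j hij
      rw [Set.disjoint_left]
      rintro h ⟨h1, _⟩ ⟨_, h4⟩
      have : R / 2 ^ j ≤ R / 2 ^ i / 2 := by
        rw [div_div, ← pow_succ]
        exact div_le_div_of_nonneg_left hR.le (by positivity)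
          (pow_le_pow_right₀ (by norm_num) hij)
      linarith
    intro i j hij
    rcases lt_or_gt_of_ne hij with h | h
    · exact key i j h
    · exact (key j i h).symm

lemma ball_le_sum {N : ℕ} (f : VV N → ℝ≥0∞) (hf : f 0 = 0) (R : ℝ) :
    ∫⁻ h in Metric.closedBall 0 R, f h ≤ ∑' k : ℕ, ∫⁻ h in Ring' N (R / 2 ^ k), f h := by
  have h1 : ∫⁻ h in Metric.closedBall 0 R, f h ≤ ∫⁻ h in ⋃ k : ℕ, Ring' N (R / 2 ^ k), f h := by
    rw [← lintegral_indicator Metric.isClosed_closedBall.measurableSet,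
      ← lintegral_indicator (MeasurableSet.iUnion fun k => measurableSet_ring N _)]
    refine lintegral_mono fun h => ?_
    by_cases h0 : h = 0
    · subst h0
      simp [Set.indicator, hf]
    by_cases hb : h ∈ Metric.closedBall (0 : VV N) R
    · have hpos : 0 < ‖h‖ := norm_pos_iff.mpr h0
      have hle : ‖h‖ ≤ R := by simpa using hb
      obtain ⟨n, hn1, hn2⟩ := exists_nat_pow_near (x := R / ‖h‖) (y := (2:ℝ))
        (by rw [le_div_iff₀ hpos]; linarith) (by norm_num)
      have hmem : h ∈ ⋃ k : ℕ, Ring' N (R / 2 ^ k) := by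
        refine Set.mem_iUnion.mpr ⟨n, ?_, ?_⟩
        · rw [div_lt_iff₀ hpos] at hn2
          rw [div_div, ← pow_succ, div_lt_iff₀ (by positivity)]
          linarith
        · rw [le_div_iff₀ hpos] at hn1
          rw [le_div_iff₀ (by positivity)]
          linarith
      rw [Set.indicator_of_mem hb, Set.indicator_of_mem hmem]
    · simp [hb]
  exact h1.trans (lintegral_iUnion_le _ _)

lemma AA_iter {N : ℕ} (E : Set (VV N)) (t R : ℝ) (k : ℕ) :
    ENNReal.ofReal ((2:ℝ) ^ (-(1-t))) ^ k * AA E t R ≤ AA E t (R/2^k) := by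
  induction k with
  | zero => simp
  | succ k ih =>
    calc _ = ENNReal.ofReal ((2:ℝ) ^ (-(1-t))) * (ENNReal.ofReal ((2:ℝ) ^ (-(1-t))) ^ k * AA E t R) := by
          rw [pow_succ]; ring
      _ ≤ ENNReal.ofReal ((2:ℝ) ^ (-(1-t))) * AA E t (R/2^k) := by gcongr
      _ ≤ _ := AA_half E t _
      _ = _ := by rw [div_div, ← pow_succ]

lemma geo (x : ℝ) (hx0 : 0 ≤ x) (hx : x < 1) :
    ∑' k : ℕ, ENNReal.ofReal x ^ k = ENNReal.ofReal (1 - x)⁻¹ := by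
  rw [ENNReal.tsum_geometric, ENNReal.ofReal_inv_of_pos (by linarith), ENNReal.ofReal_sub _ hx0]
  simp

lemma AA_le {N : ℕ} (E : Set (VV N)) (hE : MeasurableSet E) (t R : ℝ) (ht : t < 1) (hR : 0 < R) :
    AA E t R ≤ ENNReal.ofReal (3/4) * (ENNReal.ofReal (1 - t) * fracPer N t E) := by
  have hx : (2:ℝ) ^ (-(1-t)) < 1 := Real.rpow_lt_one_of_one_lt_of_neg (by norm_num) (by linarith)
  have hx0 : 0 < (2:ℝ) ^ (-(1-t)) := by positivity
  have h1 : ENNReal.ofReal (1 - (2:ℝ) ^ (-(1-t)))⁻¹ * AA E t R ≤ fracPer N t E := by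
    rw [← geo _ hx0.le hx, ← ENNReal.tsum_mul_right, fracPer_eq t E hE]
    exact (ENNReal.tsum_le_tsum (AA_iter E t R)).trans (ring_sum_le _ R hR)
  have h2 : 1 - (2:ℝ) ^ (-(1-t)) ≤ 3/4 * (1-t) := by
    have := Real.add_one_le_exp (Real.log 2 * (-(1-t)))
    rw [Real.rpow_def_of_pos (by norm_num)]
    nlinarith [Real.log_two_lt_d9]
  calc AA E t R = ENNReal.ofReal (1 - (2:ℝ) ^ (-(1-t))) *
        (ENNReal.ofReal (1 - (2:ℝ) ^ (-(1-t)))⁻¹ * AA E t R) := by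
        rw [← mul_assoc, ← ENNReal.ofReal_mul (by linarith), mul_inv_cancel₀ (by linarith)]
        simp
    _ ≤ ENNReal.ofReal (3/4 * (1-t)) * fracPer N t E := by gcongr
    _ = _ := by rw [ENNReal.ofReal_mul (by norm_num), mul_assoc]

lemma kk_ge {N : ℕ} (α r : ℝ) (hα : 0 < α) (hr : 0 < r) (h : VV N) (hh : h ∈ Ring' N r) :
    1 ≤ ENNReal.ofReal (r ^ ((N:ℝ) + α)) * kk α h := by
  obtain ⟨h1, h2⟩ := hh
  have hp : 0 < ‖h‖ := by linarith
  unfold kk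
  rw [← ENNReal.ofReal_mul (by positivity), ENNReal.one_le_ofReal, Real.rpow_neg hp.le]
  rw [← div_eq_mul_inv, one_le_div (by positivity)]
  exact Real.rpow_le_rpow hp.le h2 (by positivity)

lemma gball {N : ℕ} (hN : 0 < N) (E : Set (VV N)) (hE : MeasurableSet E) (t R : ℝ) (ht0 : 0 < t) (ht : t < 1)
    (hR : 0 < R) :
    ∫⁻ h in Metric.closedBall 0 R, gE E h ≤
      ENNReal.ofReal (3 / (3 - (1-t)) * R ^ ((N:ℝ)+t)) * (ENNReal.ofReal (1 - t) * fracPer N t E) := by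
  have hAA : ∀ r : ℝ, 0 < r → AA E t r ≤ _ := fun r hr => AA_le E hE t r ht hr
  generalize ENNReal.ofReal (1 - t) * fracPer N t E = Q at hAA ⊢
  have hNr : (1:ℝ) ≤ N := by exact_mod_cast hN
  have h1 : ∀ k : ℕ, ∫⁻ h in Ring' N (R/2^k), gE E h ≤
      ENNReal.ofReal ((2:ℝ)^(-((N:ℝ)+t))) ^ k * (ENNReal.ofReal (3/4 * R ^ ((N:ℝ)+t)) * Q) := by
    intro k
    have hr : 0 < R/2^k := by positivity
    calc ∫⁻ h in Ring' N (R/2^k), gE E h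
        ≤ ∫⁻ h in Ring' N (R/2^k), ENNReal.ofReal ((R/2^k) ^ ((N:ℝ) + t)) * (kk t h * gE E h) := by
          refine setLIntegral_mono' (measurableSet_ring _ _) fun h hh => ?_
          rw [← mul_assoc]
          exact le_mul_of_one_le_left (by positivity) (kk_ge t _ ht0 hr h hh)
      _ = ENNReal.ofReal ((R/2^k) ^ ((N:ℝ) + t)) * AA E t (R/2^k) := by
          rw [lintegral_const_mul' _ _ ENNReal.ofReal_ne_top]; rfl
      _ ≤ ENNReal.ofReal ((R/2^k) ^ ((N:ℝ) + t)) * (ENNReal.ofReal (3/4) * Q) := by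
          gcongr; exact hAA _ hr
      _ = _ := by
          rw [← mul_assoc, ← mul_assoc, ← ENNReal.ofReal_mul (by positivity), ← ENNReal.ofReal_pow (by positivity),
            ← ENNReal.ofReal_mul (by positivity)]
          congr 2
          rw [Real.div_rpow hR.le (by positivity), Real.rpow_neg (by norm_num), inv_pow,
            ← Real.rpow_natCast, ← Real.rpow_natCast, ← Real.rpow_mul (by norm_num), ← Real.rpow_mul (by norm_num),
            mul_comm (k:ℝ)]
          field_simp
  have hx : (2:ℝ)^(-((N:ℝ)+t)) ≤ 1/4 * (1 + (1-t)) := by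
    calc (2:ℝ)^(-((N:ℝ)+t)) ≤ (2:ℝ)^(-2 + (1-t)) := Real.rpow_le_rpow_of_exponent_le (by norm_num) (by linarith)
      _ = 1/4 * (1+1)^(1-t) := by
          rw [Real.rpow_add (by norm_num), Real.rpow_neg (by norm_num)]; norm_num
      _ ≤ 1/4 * (1 + (1-t) * 1) := by
          gcongr
          exact rpow_one_add_le_one_add_mul_self (by norm_num) (by linarith) (by linarith)
      _ = _ := by ring
  refine (ball_le_sum _ (gE_zero E) R).trans ((ENNReal.tsum_le_tsum h1).trans ?_)
  rw [ENNReal.tsum_mul_right, geo _ (by positivity) (by linarith), ← mul_assoc,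
    ← ENNReal.ofReal_mul (by rw [inv_nonneg]; linarith)]
  gcongr ENNReal.ofReal ?_ * _
  have : (1 - (2:ℝ)^(-((N:ℝ)+t)))⁻¹ ≤ 4 / (3 - (1-t)) := by
    rw [inv_eq_one_div, div_le_div_iff₀ (by linarith) (by linarith)]
    linarith
  calc _ ≤ 4 / (3 - (1-t)) * (3/4 * R ^ ((N:ℝ)+t)) := by gcongr
    _ = _ := by ring

noncomputable def om (N : ℕ) : ℝ := (volume (Metric.ball (0 : VV N) 1)).toReal

lemma om_pos (N : ℕ) : 0 < om N :=
  ENNReal.toReal_pos (Metric.measure_ball_pos _ _ (by norm_num)).ne' measure_ball_lt_top.ne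

lemma om_one : om 1 = 2 := by
  unfold om
  rw [EuclideanSpace.volume_ball]
  have : Real.Gamma (1 / 2 + 1) = √Real.pi / 2 := by
    rw [Real.Gamma_add_one (by norm_num), Real.Gamma_one_half_eq]; ring
  simp only [Fintype.card_fin, Nat.cast_one, this]
  have h : √Real.pi ≠ 0 := by positivity
  simp only [ENNReal.ofReal_one, pow_one, one_mul]
  rw [ENNReal.toReal_ofReal (by positivity)]
  field_simp

lemma vol_cb (N : ℕ) (R : ℝ) (hR : 0 ≤ R) :
    volume (Metric.closedBall (0 : VV N) R) = ENNReal.ofReal (R ^ N * om N) := by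
  rw [Measure.addHaar_closedBall _ _ hR, ENNReal.ofReal_mul (by positivity), om,
    ENNReal.ofReal_toReal measure_ball_lt_top.ne]
  simp

lemma const_bd (N : ℕ) (hN : 0 < N) : ∃ K : ℝ, 1 ≤ K ∧ ∀ t : ℝ, 0 < t → t < 1 →
    (3 / (3 - (1-t)) * (2 / om N) ^ (((N:ℝ)+t)/N)) ^ ((N:ℝ) / (N - t)) ≤ K := by
  rcases Nat.lt_or_ge N 2 with h | h
  · obtain rfl : N = 1 := by omega
    refine ⟨3/2, by norm_num, fun t ht0 ht => ?_⟩
    rw [om_one]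
    have hu : 0 < 1 - t := by linarith
    have h1 : (2/3:ℝ) ^ (1-t) ≤ 1 + (1-t) * (-1/3) := by
      have := rpow_one_add_le_one_add_mul_self (s := -1/3) (by norm_num) hu.le (by linarith : 1 - t ≤ 1)
      norm_num at this ⊢; linarith
    have h2 : 3 / (3 - (1-t)) ≤ (3/2:ℝ) ^ (1-t) := by
      have h3 : (3/2:ℝ) ^ (1-t) = ((2/3:ℝ) ^ (1-t))⁻¹ := by
        rw [← Real.inv_rpow (by norm_num)]; norm_num
      have hp : 0 < (2/3:ℝ) ^ (1-t) := by positivity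
      rw [h3, inv_eq_one_div, div_le_div_iff₀ (by linarith) hp]
      linarith
    calc _ = (3 / (3 - (1-t))) ^ (1 / (1-t)) := by norm_num
      _ ≤ ((3/2:ℝ) ^ (1-t)) ^ (1 / (1-t)) := by
          apply Real.rpow_le_rpow _ h2 (by positivity)
          apply div_nonneg (by norm_num); linarith
      _ = 3/2 := by
          rw [← Real.rpow_mul (by norm_num), mul_one_div_cancel hu.ne', Real.rpow_one]
  · have hN2 : (2:ℝ) ≤ N := by exact_mod_cast h
    have hom := om_pos N
    set m := max 1 (2 / om N)
    have hm : 1 ≤ m := le_max_left _ _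
    have hM : (1:ℝ) ≤ 3/2 * m^2 := by nlinarith
    refine ⟨(3/2 * m^2)^2, by nlinarith, fun t ht0 ht => ?_⟩
    have h1 : 3 / (3 - (1-t)) ≤ 3/2 := by
      rw [div_le_div_iff₀ (by linarith) (by norm_num)]; linarith
    have h0 : 0 ≤ 3 / (3 - (1-t)) := div_nonneg (by norm_num) (by linarith)
    have h2 : (2 / om N) ^ (((N:ℝ)+t)/N) ≤ m^2 := by
      calc _ ≤ m ^ (((N:ℝ)+t)/N) := Real.rpow_le_rpow (by positivity) (le_max_right _ _) (by positivity)
        _ ≤ m ^ (2:ℝ) := Real.rpow_le_rpow_of_exponent_le hm (by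
            rw [div_le_iff₀ (by linarith)]; linarith)
        _ = m^2 := by norm_num
    calc _ ≤ (3/2 * m^2) ^ ((N:ℝ) / (N - t)) := by
          apply Real.rpow_le_rpow (by positivity) _ (div_nonneg (by linarith) (by linarith))
          gcongr
      _ ≤ (3/2 * m^2) ^ (2:ℝ) := Real.rpow_le_rpow_of_exponent_le hM (by
            rw [div_le_iff₀ (by linarith)]; linarith)
      _ = _ := by norm_num

lemma iso (N : ℕ) (hN : 0 < N) : ∃ K : ℝ, 1 ≤ K ∧ ∀ t : ℝ, 0 < t → t < 1 →
    ∀ E : Set (VV N), MeasurableSet E → volume E < ⊤ → ∀ q : ℝ, 0 ≤ q →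
    ENNReal.ofReal (1 - t) * fracPer N t E = ENNReal.ofReal q →
    (volume E).toReal ≤ K * q ^ ((N:ℝ) / (N - t)) := by
  obtain ⟨K, hK, hKt⟩ := const_bd N hN
  refine ⟨K, hK, fun t ht0 ht E hE hEf q hq hQ => ?_⟩
  have hNr : (1:ℝ) ≤ N := by exact_mod_cast hN
  have hom := om_pos N
  have hL0 : 0 ≤ (volume E).toReal := ENNReal.toReal_nonneg
  have hvol : volume E = ENNReal.ofReal (volume E).toReal := (ENNReal.ofReal_toReal hEf.ne).symm
  set L := (volume E).toReal
  rcases hL0.eq_or_lt with h0 | hL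
  · rw [← h0]; positivity
  set R := (2 * L / om N) ^ (1 / (N:ℝ)) with hRdef
  have hR : 0 < R := by positivity
  have hRN : R ^ N * om N = 2 * L := by
    rw [hRdef, ← Real.rpow_natCast, ← Real.rpow_mul (by positivity), one_div_mul_cancel (by positivity),
      Real.rpow_one]
    field_simp
  have hM1 : 0 < 3 / (3 - (1-t)) := div_pos (by norm_num) (by linarith)
  have h1 := (gE_int E hE (Metric.closedBall 0 R)).trans
    (add_le_add_left (gball hN E hE t R ht0 ht hR) _)
  rw [hQ, vol_cb N R hR.le, hRN, hvol, ← ENNReal.ofReal_mul (by positivity), ← ENNReal.ofReal_mul (by positivity),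
    ← ENNReal.ofReal_mul (by positivity), ← ENNReal.ofReal_add (by positivity) (by positivity),
    ENNReal.ofReal_le_ofReal_iff (by positivity)] at h1
  have hRt : R ^ ((N:ℝ)+t) = (2 / om N) ^ (((N:ℝ)+t)/N) * L ^ (((N:ℝ)+t)/N) := by
    rw [← Real.mul_rpow (by positivity) (by positivity), hRdef, ← Real.rpow_mul (by positivity)]
    congr 1 <;> ring
  have h2 : L ^ (((N:ℝ)-t)/N) ≤ (3 / (3 - (1-t)) * (2 / om N) ^ (((N:ℝ)+t)/N)) * q := by
    have hLp : 0 < L ^ (((N:ℝ)+t)/N) := by positivity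
    have hmul : L ^ (((N:ℝ)-t)/N) * L ^ (((N:ℝ)+t)/N) = L * L := by
      rw [← Real.rpow_add hL, ← add_div]
      have : ((N:ℝ) - t + (N + t)) / N = (2:ℕ) := by field_simp; push_cast; ring
      rw [this, Real.rpow_natCast]; ring
    refine le_of_mul_le_mul_right ?_ hLp
    rw [hmul]
    rw [hRt] at h1
    linarith
  have hNt : 0 < (N:ℝ) - t := by linarith
  calc L = (L ^ (((N:ℝ)-t)/N)) ^ ((N:ℝ) / (N - t)) := by
        rw [← Real.rpow_mul hL.le]
        rw [div_mul_div_cancel₀ (by positivity), div_self hNt.ne', Real.rpow_one]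
    _ ≤ _ := Real.rpow_le_rpow (by positivity) h2 (by positivity)
    _ = (3 / (3 - (1-t)) * (2 / om N) ^ (((N:ℝ)+t)/N)) ^ ((N:ℝ) / (N - t)) * q ^ ((N:ℝ) / (N - t)) :=
        Real.mul_rpow (by positivity) hq
    _ ≤ _ := by gcongr; exact hKt t ht0 ht

lemma near_le {N : ℕ} (E : Set (VV N)) (hE : MeasurableSet E) (δ s t R : ℝ) (hδ : 0 < δ) (hs : 0 < s)
    (ht : t < 1) (hst : δ ≤ t - s) (hR : 0 < R) :
    ∫⁻ h in Metric.closedBall 0 R, kk s h * gE E h ≤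
      ENNReal.ofReal ((1 - 2 ^ (-δ))⁻¹ * R ^ (t-s)) * (ENNReal.ofReal (1 - t) * fracPer N t E) := by
  have hAA : ∀ r : ℝ, 0 < r → AA E t r ≤ _ := fun r hr => AA_le E hE t r ht hr
  generalize ENNReal.ofReal (1 - t) * fracPer N t E = Q at hAA ⊢
  have h1 : ∀ k : ℕ, AA E s (R/2^k) ≤
      ENNReal.ofReal ((2:ℝ)^(-δ)) ^ k * (ENNReal.ofReal (R ^ (t-s)) * Q) := by
    intro k
    have hr : 0 < R/2^k := by positivity
    calc AA E s (R/2^k)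
        ≤ ∫⁻ h in Ring' N (R/2^k), ENNReal.ofReal ((R/2^k) ^ (t-s)) * (kk t h * gE E h) := by
          refine setLIntegral_mono' (measurableSet_ring _ _) fun h hh => ?_
          rw [← mul_assoc]
          gcongr
          obtain ⟨h1, h2⟩ := hh
          have hp : 0 < ‖h‖ := by linarith
          unfold kk
          rw [← ENNReal.ofReal_mul (by positivity)]
          apply ENNReal.ofReal_le_ofReal
          calc _ = ‖h‖ ^ (t-s) * ‖h‖ ^ (-((N:ℝ)+t)) := by
                rw [← Real.rpow_add hp]; congr 1; ring
            _ ≤ _ := by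
                gcongr
                linarith
      _ = ENNReal.ofReal ((R/2^k) ^ (t-s)) * AA E t (R/2^k) := by
          rw [lintegral_const_mul' _ _ ENNReal.ofReal_ne_top]; rfl
      _ ≤ ENNReal.ofReal ((R/2^k) ^ (t-s)) * (ENNReal.ofReal (3/4) * Q) := by
          gcongr; exact hAA _ hr
      _ ≤ _ := by
          rw [← mul_assoc, ← mul_assoc, ← ENNReal.ofReal_mul (by positivity), ← ENNReal.ofReal_pow (by positivity),
            ← ENNReal.ofReal_mul (by positivity)]
          gcongr ENNReal.ofReal ?_ * _
          calc (R/2^k) ^ (t-s) * (3/4) ≤ (R/2^k) ^ (t-s) * 1 := by gcongr; norm_num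
            _ = (2:ℝ)^(-(k * (t-s))) * R ^ (t-s) := by
                rw [Real.div_rpow hR.le (by positivity), Real.rpow_neg (by norm_num),
                  ← Real.rpow_natCast 2 k, ← Real.rpow_mul (by norm_num)]
                field_simp
            _ ≤ (2:ℝ)^(-δ * k) * R ^ (t-s) := by
                gcongr
                · norm_num
                · have : (0:ℝ) ≤ k := by positivity
                  nlinarith
            _ = _ := by rw [Real.rpow_mul (by norm_num), Real.rpow_natCast]
  have hx : (2:ℝ)^(-δ) < 1 := Real.rpow_lt_one_of_one_lt_of_neg (by norm_num) (by linarith)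
  refine (ball_le_sum _ (by simp [gE_zero]) R).trans ((ENNReal.tsum_le_tsum h1).trans ?_)
  rw [ENNReal.tsum_mul_right, geo _ (by positivity) hx, ← mul_assoc,
    ← ENNReal.ofReal_mul (by rw [inv_nonneg]; linarith)]

lemma far_le {N : ℕ} (E : Set (VV N)) (s R : ℝ) (hs : 0 < s) (hs1 : s < 1) (hR : 0 < R) :
    ENNReal.ofReal s * ∫⁻ h in (Metric.closedBall 0 R)ᶜ, kk s h * gE E h ≤
      ENNReal.ofReal (2 ^ (N+1) * om N * R ^ (-s)) * volume E := by
  have hom := om_pos N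
  have hsub : (Metric.closedBall (0 : VV N) R)ᶜ ⊆
      ⋃ k : ℕ, {h : VV N | R * 2 ^ k ≤ ‖h‖ ∧ ‖h‖ ≤ R * 2 ^ (k+1)} := by
    intro h hh
    have hh' : R < ‖h‖ := by simpa using hh
    obtain ⟨n, hn1, hn2⟩ := exists_nat_pow_near (x := ‖h‖ / R) (y := (2:ℝ))
        (by rw [le_div_iff₀ hR]; linarith) (by norm_num)
    rw [le_div_iff₀ hR] at hn1
    rw [div_lt_iff₀ hR] at hn2
    exact Set.mem_iUnion.mpr ⟨n, by linarith, by linarith⟩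
  have h1 : ∀ k : ℕ, ∫⁻ h in {h : VV N | R * 2 ^ k ≤ ‖h‖ ∧ ‖h‖ ≤ R * 2 ^ (k+1)}, kk s h * gE E h ≤
      ENNReal.ofReal ((2:ℝ)^(-s)) ^ k * (ENNReal.ofReal (2 ^ N * om N * R ^ (-s)) * volume E) := by
    intro k
    have hr : 0 < R * 2 ^ k := by positivity
    have hS : MeasurableSet {h : VV N | R * 2 ^ k ≤ ‖h‖ ∧ ‖h‖ ≤ R * 2 ^ (k+1)} :=
      (measurableSet_le measurable_const measurable_norm).inter
        (measurableSet_le measurable_norm measurable_const)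
    calc _ ≤ ∫⁻ h in {h : VV N | R * 2 ^ k ≤ ‖h‖ ∧ ‖h‖ ≤ R * 2 ^ (k+1)},
          ENNReal.ofReal ((R * 2 ^ k) ^ (-((N:ℝ) + s))) * volume E := by
          refine setLIntegral_mono' hS fun h hh => ?_
          gcongr
          · exact ENNReal.ofReal_le_ofReal
              (Real.rpow_le_rpow_of_nonpos hr hh.1 (by have : (0:ℝ) ≤ N := by positivity
                                                       linarith))
          · exact gE_le E h
      _ = ENNReal.ofReal ((R * 2 ^ k) ^ (-((N:ℝ) + s))) * volume E *
          volume {h : VV N | R * 2 ^ k ≤ ‖h‖ ∧ ‖h‖ ≤ R * 2 ^ (k+1)} := by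
          rw [setLIntegral_const]
      _ ≤ ENNReal.ofReal ((R * 2 ^ k) ^ (-((N:ℝ) + s))) * volume E *
          volume (Metric.closedBall (0 : VV N) (R * 2 ^ (k+1))) := by
          gcongr
          intro h hh
          simpa using hh.2
      _ = _ := by
          rw [vol_cb _ _ (by positivity), mul_right_comm, ← mul_assoc, ← ENNReal.ofReal_mul (by positivity),
            ← ENNReal.ofReal_pow (by positivity), ← ENNReal.ofReal_mul (by positivity)]
          congr 2
          have e1 : (R * 2 ^ k) ^ (-((N:ℝ) + s)) = ((R * 2^k) ^ N)⁻¹ * (R ^ (-s) * (2 ^ (-s)) ^ k) := by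
            rw [neg_add, Real.rpow_add hr, Real.rpow_neg hr.le, Real.rpow_natCast,
              Real.mul_rpow hR.le (by positivity), ← Real.rpow_natCast 2 k, ← Real.rpow_natCast _ k,
              ← Real.rpow_mul (by norm_num), ← Real.rpow_mul (by norm_num), mul_comm (k:ℝ)]
          have e2 : (R * 2 ^ (k+1)) ^ N = (R * 2 ^ k) ^ N * 2 ^ N := by
            rw [← mul_pow]; ring
          rw [e1, e2]
          field_simp
  have hx : (2:ℝ)^(-s) ≤ 1 - s / 2 := by
    have := rpow_one_add_le_one_add_mul_self (s := -1/2) (by norm_num) hs.le hs1.le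
    rw [Real.rpow_neg (by norm_num), ← Real.inv_rpow (by norm_num)]
    norm_num at this ⊢; linarith
  calc _ ≤ ENNReal.ofReal s * ∑' k : ℕ, ENNReal.ofReal ((2:ℝ)^(-s)) ^ k *
          (ENNReal.ofReal (2 ^ N * om N * R ^ (-s)) * volume E) := by
        gcongr
        exact (lintegral_mono_set hsub).trans
          ((lintegral_iUnion_le _ _).trans (ENNReal.tsum_le_tsum h1))
    _ ≤ _ := by
        rw [ENNReal.tsum_mul_right, geo _ (by positivity) (by linarith), ← mul_assoc, ← mul_assoc,
          ← ENNReal.ofReal_mul hs.le, ← ENNReal.ofReal_mul (mul_nonneg hs.le (by rw [inv_nonneg]; linarith))]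
        gcongr ENNReal.ofReal ?_ * _
        have : s * (1 - (2:ℝ)^(-s))⁻¹ ≤ 2 := by
          rw [← div_eq_mul_inv, div_le_iff₀ (by linarith)]; linarith
        calc _ ≤ 2 * (2 ^ N * om N * R ^ (-s)) := by gcongr
          _ = _ := by ring

theorem stmt17 (N : ℕ) (hN : 0 < N) (δ₀ : ℝ) (hδ : δ₀ ∈ Set.Ioo (0 : ℝ) 1) :
    ∃ c : ℝ, 0 < c ∧
      ∀ s t : ℝ, 0 < s → s < t → t < 1 → δ₀ ≤ t - s →
        ∀ E : Set (EuclideanSpace ℝ (Fin N)), MeasurableSet E → volume E < ⊤ →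
          ENNReal.ofReal c * (ENNReal.ofReal s * fracPer N s E) ≤
            (ENNReal.ofReal (1 - t) * fracPer N t E) ^
              (((N : ℝ) - s) / ((N : ℝ) - t)) := by
  obtain ⟨K, hK, hiso⟩ := iso N hN
  have hNr : (1:ℝ) ≤ N := by exact_mod_cast hN
  have hom := om_pos N
  have hx : (2:ℝ)^(-δ₀) < 1 :=
    Real.rpow_lt_one_of_one_lt_of_neg (by norm_num) (by linarith [hδ.1])
  have hx' : 0 < (1 - (2:ℝ)^(-δ₀))⁻¹ := inv_pos.mpr (by linarith)
  set C1 := (1 - (2:ℝ)^(-δ₀))⁻¹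
  set C2 := 2 ^ (N+1) * om N with hC2
  have hC2p : 0 < C2 := by positivity
  have hC : 0 < C1 + C2 * K := by positivity
  refine ⟨(C1 + C2 * K)⁻¹, by positivity, fun s t hs hst ht hd E hE hEf => ?_⟩
  have hNt : 0 < (N:ℝ) - t := by linarith
  have hNs : 0 < (N:ℝ) - s := by linarith
  have hexp : 0 < ((N : ℝ) - s) / ((N : ℝ) - t) := by positivity
  by_cases htop : ENNReal.ofReal (1 - t) * fracPer N t E = ⊤
  · rw [htop, ENNReal.top_rpow_of_pos hexp]; exact le_top
  obtain ⟨q, hq, hQ⟩ : ∃ q : ℝ, 0 ≤ q ∧ ENNReal.ofReal (1 - t) * fracPer N t E = ENNReal.ofReal q :=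
    ⟨_, ENNReal.toReal_nonneg, (ENNReal.ofReal_toReal htop).symm⟩
  have hL := hiso t (hs.trans hst) ht E hE hEf q hq hQ
  have hvol : volume E = ENNReal.ofReal (volume E).toReal := (ENNReal.ofReal_toReal hEf.ne).symm
  rcases hq.eq_or_lt with h0 | hqp
  · rw [← h0, Real.zero_rpow (by positivity), mul_zero] at hL
    have hz : volume E = 0 := by rw [hvol]; simp [hL]
    have : fracPer N s E = 0 := by
      unfold fracPer interEnergy
      exact setLIntegral_measure_zero _ _ hz
    simp [this]
  set R := q ^ (1 / ((N:ℝ) - t)) with hRdef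
  have hR : 0 < R := by positivity
  have e1 : R ^ (t - s) * q = q ^ (((N : ℝ) - s) / ((N : ℝ) - t)) := by
    rw [hRdef, ← Real.rpow_mul hq, ← Real.rpow_add_one hqp.ne']
    congr 1; field_simp; ring
  have e2 : q ^ ((N:ℝ) / (N - t)) * R ^ (-s) = q ^ (((N : ℝ) - s) / ((N : ℝ) - t)) := by
    rw [hRdef, ← Real.rpow_mul hq, ← Real.rpow_add hqp]
    congr 1; field_simp; ring
  have hmain : ENNReal.ofReal s * fracPer N s E ≤
      ENNReal.ofReal ((C1 + C2 * K) * q ^ (((N : ℝ) - s) / ((N : ℝ) - t))) := by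
    rw [fracPer_eq s E hE, ← lintegral_add_compl _ (Metric.isClosed_closedBall (x := (0 : VV N)) (ε := R)).measurableSet,
      mul_add]
    have n1 := near_le E hE δ₀ s t R hδ.1 hs ht hd hR
    have n2 := far_le E s R hs (by linarith) hR
    rw [hQ] at n1
    calc _ ≤ 1 * (ENNReal.ofReal (C1 * R ^ (t-s)) * ENNReal.ofReal q) +
          ENNReal.ofReal (C2 * R ^ (-s)) * volume E := by
          gcongr
          rw [ENNReal.ofReal_le_one]; linarith
      _ = ENNReal.ofReal (C1 * R ^ (t-s) * q + C2 * R ^ (-s) * (volume E).toReal) := by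
          conv_lhs => rw [hvol]
          rw [one_mul, ← ENNReal.ofReal_mul (by positivity), ← ENNReal.ofReal_mul (by positivity),
            ← ENNReal.ofReal_add (by positivity) (by positivity)]
      _ ≤ _ := by
          apply ENNReal.ofReal_le_ofReal
          calc _ ≤ C1 * R ^ (t-s) * q + C2 * R ^ (-s) * (K * q ^ ((N:ℝ) / (N - t))) := by gcongr
            _ = C1 * (R ^ (t-s) * q) + C2 * K * (q ^ ((N:ℝ) / (N - t)) * R ^ (-s)) := by ring
            _ = _ := by rw [e1, e2]; ring
  rw [hQ, ENNReal.ofReal_rpow_of_pos hqp]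
  calc _ ≤ ENNReal.ofReal (C1 + C2 * K)⁻¹ * _ := mul_le_mul_right hmain _
    _ = _ := by
      rw [← ENNReal.ofReal_mul (by positivity), inv_mul_cancel_left₀ hC.ne']
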